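/- Let D ⊆ ℝ^n be a nonempty bounded open convex set and let β ∈ (0, 1). Then there exists a constant C > 0, depending only on D and β, with the following property: for every A ≥ 0 and every function f : ℝ^n → ℝ that is differentiable at each point of D and satisfies ‖Df(x)‖ ≤ A · dist(x, ∂D)^{β-1} for all x ∈ D, one has |f(x) - f(y)| ≤ C · A · ‖x - y‖^β for all x, y ∈ D. -/

import Mathlib

/-!
Fix a ball `B(p, r) ⊆ D` and a bound `M` for the diameter of `D`. Moving from `x ∈ D` a fraction `t`
of the way to `p` yields a point `x_t = x + t (p - x)` with `dist(x_t, ∂D) ≥ t r`, because `D` contains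
the homothetic image `B(x_t, t r)` of `B(p, r)` with centre `x`
(`mul_le_infDist_frontier`).

For `x ≠ y` in `D` put `t = ‖x - y‖ / M` and go from `x` to `x_t`, then straight to `y_t`, then to `y`.
On the two radial pieces the derivative is at most `A M r^(β-1) s^(β-1)`, whose integral over `[0, t]`
is `A M r^(β-1) t^β / β` (`abs_sub_radial_le`). On the middle piece, of length at most `t M`, the
gradient is at most `A (t r)^(β-1)`. The sum is a constant times `A t^β`.
-/

theorem mul_le_infDist_frontier {E : Type*} [NormedAddCommGroup E] [NormedSpace ℝ E]
    {D : Set E} (hop : IsOpen D) (hcv : Convex ℝ D) (hfr : (frontier D).Nonempty)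
    {p x : E} {r t : ℝ} (hball : Metric.ball p r ⊆ D) (hx : x ∈ D) (ht0 : 0 < t) (ht1 : t ≤ 1) :
    t * r ≤ Metric.infDist (x + t • (p - x)) (frontier D) := by
  refine (Metric.le_infDist hfr).2 fun y hy => ?_
  by_contra! hlt
  have hyD : y ∉ D := by
    rw [hop.frontier_eq] at hy
    exact hy.2
  apply hyD
  -- `q` is the preimage of `y` under the homothety with centre `x` and ratio `t`.
  set q : E := p + t⁻¹ • (y - (x + t • (p - x))) with hq
  have hqD : q ∈ D := by
    apply hball
    rw [Metric.mem_ball, dist_eq_norm, hq, add_sub_cancel_left, norm_smul, norm_inv,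
      Real.norm_of_nonneg ht0.le, ← dist_eq_norm, dist_comm, inv_mul_lt_iff₀ ht0]
    exact hlt
  have hyq : y = (1 - t) • x + t • q := by
    rw [hq, smul_add, smul_smul, mul_inv_cancel₀ ht0.ne']
    module
  rw [hyq]
  exact hcv hx hqD (by linarith) ht0.le (by ring)

/-- One-variable estimate: `s ↦ K s^β / β - g s` is monotone on `[0, t]`. Only one-sided continuity is
needed at `0`, where the bound on the derivative may blow up. -/
theorem sub_le_of_deriv_le_rpow {g g' : ℝ → ℝ} {K β t : ℝ} (hβ : 0 < β) (ht : 0 ≤ t)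
    (hc : ContinuousOn g (Set.Icc 0 t)) (hd : ∀ s ∈ Set.Ioo 0 t, HasDerivAt g (g' s) s)
    (hb : ∀ s ∈ Set.Ioo 0 t, g' s ≤ K * s ^ (β - 1)) :
    g t - g 0 ≤ K / β * t ^ β := by
  have hder : ∀ s ∈ Set.Ioo 0 t,
      HasDerivAt (fun s => K / β * s ^ β - g s) (K * s ^ (β - 1) - g' s) s := by
    intro s hs
    have h := ((Real.hasDerivAt_rpow_const (p := β) (Or.inl hs.1.ne')).const_mul (K / β)).sub
      (hd s hs)
    rw [← mul_assoc, div_mul_cancel₀ _ hβ.ne'] at h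
    exact h
  have hmono : MonotoneOn (fun s => K / β * s ^ β - g s) (Set.Icc 0 t) := by
    refine monotoneOn_of_deriv_nonneg (convex_Icc 0 t) ?_ ?_ ?_
    · exact (continuousOn_const.mul
        (Real.continuous_rpow_const hβ.le).continuousOn).sub hc
    · rw [interior_Icc]
      exact fun s hs => (hder s hs).differentiableAt.differentiableWithinAt
    · rw [interior_Icc]
      intro s hs
      rw [(hder s hs).deriv]
      linarith [hb s hs]
  have h := hmono (Set.left_mem_Icc.2 ht) (Set.right_mem_Icc.2 ht) ht
  simp only [Real.zero_rpow hβ.ne', mul_zero] at h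
  linarith

theorem abs_sub_radial_le {E : Type*} [NormedAddCommGroup E] [NormedSpace ℝ E]
    {D : Set E} (hop : IsOpen D) (hcv : Convex ℝ D) (hfr : (frontier D).Nonempty)
    {p x : E} {r t M A β : ℝ} (hr : 0 < r) (hball : Metric.ball p r ⊆ D) (hp : p ∈ D) (hx : x ∈ D)
    (ht0 : 0 ≤ t) (ht1 : t ≤ 1) (hM : ‖p - x‖ ≤ M) (hA : 0 ≤ A) (hβ : β ∈ Set.Ioo (0 : ℝ) 1)
    {f : E → ℝ} (hf : ∀ x ∈ D, DifferentiableAt ℝ f x)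
    (hb : ∀ x ∈ D, ‖fderiv ℝ f x‖ ≤ A * Metric.infDist x (frontier D) ^ (β - 1)) :
    |f (x + t • (p - x)) - f x| ≤ A * M * r ^ (β - 1) / β * t ^ β := by
  have hmem : ∀ s ∈ Set.Icc 0 t, x + s • (p - x) ∈ D := fun s hs =>
    hcv.add_smul_sub_mem hx hp ⟨hs.1, hs.2.trans ht1⟩
  have hd : ∀ s ∈ Set.Icc 0 t, HasDerivAt (fun s : ℝ => f (x + s • (p - x)))
      (fderiv ℝ f (x + s • (p - x)) (p - x)) s := by
    intro s hs
    have h1 : HasDerivAt (fun s : ℝ => x + s • (p - x)) (p - x) s := by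
      simpa using ((hasDerivAt_id s).smul_const (p - x)).const_add x
    exact (hf _ (hmem s hs)).hasFDerivAt.comp_hasDerivAt s h1
  have hbd : ∀ s ∈ Set.Ioo 0 t, |fderiv ℝ f (x + s • (p - x)) (p - x)|
      ≤ A * M * r ^ (β - 1) * s ^ (β - 1) := by
    intro s hs
    have hs' : s ∈ Set.Icc 0 t := ⟨hs.1.le, hs.2.le⟩
    have hdist := mul_le_infDist_frontier hop hcv hfr hball hx hs.1 (hs.2.le.trans ht1)
    have hsr : 0 < s * r := mul_pos hs.1 hr
    calc |fderiv ℝ f (x + s • (p - x)) (p - x)|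
        ≤ ‖fderiv ℝ f (x + s • (p - x))‖ * ‖p - x‖ := (fderiv ℝ f (x + s • (p - x))).le_opNorm (p - x)
      _ ≤ (A * (s * r) ^ (β - 1)) * M := by
          refine mul_le_mul ((hb _ (hmem s hs')).trans ?_) hM (norm_nonneg _) (by positivity)
          exact mul_le_mul_of_nonneg_left
            (Real.rpow_le_rpow_of_nonpos hsr hdist (by linarith [hβ.2])) hA
      _ = A * M * r ^ (β - 1) * s ^ (β - 1) := by
          rw [Real.mul_rpow hs.1.le hr.le]; ring
  have hc : ContinuousOn (fun s : ℝ => f (x + s • (p - x))) (Set.Icc 0 t) :=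
    fun s hs => (hd s hs).continuousAt.continuousWithinAt
  have h1 := sub_le_of_deriv_le_rpow hβ.1 ht0 hc (fun s hs => hd s ⟨hs.1.le, hs.2.le⟩)
    (fun s hs => (le_abs_self _).trans (hbd s hs))
  have h2 := sub_le_of_deriv_le_rpow hβ.1 ht0 hc.neg
    (fun s hs => (hd s ⟨hs.1.le, hs.2.le⟩).neg)
    (fun s hs => (neg_le_abs _).trans (hbd s hs))
  simp only [zero_smul, add_zero, Pi.neg_apply] at h1 h2
  exact abs_le.2 ⟨by linarith, h1⟩

/-- Hardy–Littlewood type lemma: on a nonempty bounded open convex set `D ⊆ ℝ^n` and for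
`β ∈ (0,1)`, there is `C > 0` such that any `f` differentiable on `D` whose derivative
satisfies `‖Df(x)‖ ≤ A dist(x, ∂D)^{β-1}` is Hölder of exponent `β` with constant `C·A`. -/
theorem holder_of_derivative_blowup
    (n : ℕ) (D : Set (EuclideanSpace ℝ (Fin n)))
    (hne : D.Nonempty) (hbd : Bornology.IsBounded D) (hop : IsOpen D) (hcv : Convex ℝ D)
    (β : ℝ) (hβ : β ∈ Set.Ioo (0 : ℝ) 1) :
    ∃ C > 0, ∀ A : ℝ, 0 ≤ A → ∀ f : EuclideanSpace ℝ (Fin n) → ℝ,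
      (∀ x ∈ D, DifferentiableAt ℝ f x) →
      (∀ x ∈ D, ‖fderiv ℝ f x‖ ≤ A * Metric.infDist x (frontier D) ^ (β - 1)) →
      ∀ x ∈ D, ∀ y ∈ D, |f x - f y| ≤ C * A * ‖x - y‖ ^ β := by
  obtain ⟨p, hp⟩ := hne
  obtain ⟨r, hr, hball⟩ := Metric.isOpen_iff.1 hop p hp
  obtain ⟨M, hM0, hM⟩ : ∃ M > 0, ∀ x ∈ D, ∀ y ∈ D, ‖x - y‖ ≤ M := by
    obtain ⟨M, hM⟩ := Metric.isBounded_iff.1 hbd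
    refine ⟨max M 1, by positivity, fun x hx y hy => ?_⟩
    rw [← dist_eq_norm]
    exact (hM hx hy).trans (le_max_left _ _)
  have hβ0 := hβ.1
  refine ⟨M * r ^ (β - 1) * (2 / β + 1) / M ^ β, by positivity, ?_⟩
  intro A hA f hf hb x hx y hy
  rcases eq_or_ne x y with rfl | hxy
  · rw [sub_self, abs_zero]
    positivity
  -- Two distinct points exclude `n = 0`, where `∂D` is empty and `infDist` takes a junk value.
  have hfr : (frontier D).Nonempty := by
    have : Nontrivial (EuclideanSpace ℝ (Fin n)) := ⟨x, y, hxy⟩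
    rw [Set.nonempty_iff_ne_empty, Ne, frontier_eq_empty_iff]
    rintro (h | rfl)
    · exact (h ▸ hp : p ∈ (∅ : Set _))
    · exact NormedSpace.unbounded_univ ℝ _ hbd
  have hd0 : 0 < ‖x - y‖ := norm_pos_iff.2 (sub_ne_zero.2 hxy)
  set t : ℝ := ‖x - y‖ / M with ht
  have ht0 : 0 < t := div_pos hd0 hM0
  have ht1 : t ≤ 1 := (div_le_one hM0).2 (hM x hx y hy)
  have hX := abs_sub_radial_le hop hcv hfr hr hball hp hx ht0.le ht1 (hM p hp x hx) hA hβ hf hb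
  have hY := abs_sub_radial_le hop hcv hfr hr hball hp hy ht0.le ht1 (hM p hp y hy) hA hβ hf hb
  -- A point of the middle segment is `z + t (p - z)` with `z` in the segment from `x` to `y`.
  have hseg : ∀ w ∈ segment ℝ (x + t • (p - x)) (y + t • (p - y)),
      ∃ z ∈ D, w = z + t • (p - z) := by
    rintro w ⟨a, b, ha, hb', hab, rfl⟩
    refine ⟨a • x + b • y, hcv hx hy ha hb' hab, ?_⟩
    obtain rfl : b = 1 - a := by linarith
    module
  have htr : 0 < t * r := mul_pos ht0 hr
  have hmid : |f (y + t • (p - y)) - f (x + t • (p - x))| ≤ A * M * r ^ (β - 1) * t ^ β := by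
    have hmv := (convex_segment (𝕜 := ℝ) (x + t • (p - x)) (y + t • (p - y))
      ).norm_image_sub_le_of_norm_fderiv_le
      (𝕜 := ℝ) (f := f) (C := A * (t * r) ^ (β - 1)) (fun w hw => ?_) (fun w hw => ?_)
      (left_mem_segment ℝ _ _) (right_mem_segment ℝ _ _)
    · rw [Real.norm_eq_abs] at hmv
      refine hmv.trans ?_
      have hlen : ‖y + t • (p - y) - (x + t • (p - x))‖ ≤ t * M := by
        have : y + t • (p - y) - (x + t • (p - x)) = (1 - t) • (y - x) := by module
        rw [this, norm_smul, Real.norm_of_nonneg (by linarith), norm_sub_rev y x, ht,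
          div_mul_cancel₀ _ hM0.ne', ← ht]
        nlinarith
      refine (mul_le_mul_of_nonneg_left hlen (by positivity)).trans_eq ?_
      have : t ^ β = t ^ (β - 1) * t := by
        rw [← Real.rpow_add_one ht0.ne', sub_add_cancel]
      rw [Real.mul_rpow ht0.le hr.le, this]
      ring
    · obtain ⟨z, hz, rfl⟩ := hseg w hw
      exact hf _ (hcv.add_smul_sub_mem hz hp ⟨ht0.le, ht1⟩)
    · obtain ⟨z, hz, rfl⟩ := hseg w hw
      refine (hb _ (hcv.add_smul_sub_mem hz hp ⟨ht0.le, ht1⟩)).trans ?_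
      exact mul_le_mul_of_nonneg_left (Real.rpow_le_rpow_of_nonpos htr
        (mul_le_infDist_frontier hop hcv hfr hball hz ht0 ht1) (by linarith [hβ.2])) hA
  have htot : M * r ^ (β - 1) * (2 / β + 1) / M ^ β * A * ‖x - y‖ ^ β
      = 2 * (A * M * r ^ (β - 1) / β * t ^ β) + A * M * r ^ (β - 1) * t ^ β := by
    rw [ht, Real.div_rpow hd0.le hM0.le]
    ring
  rw [htot]
  rw [abs_le] at hX hY hmid ⊢
  constructor <;> linarith [hX.1, hX.2, hY.1, hY.2, hmid.1, hmid.2]
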